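/- Let α > 0, let q ∈ [1,∞], and let f : (0,1] → ℝ be measurable. Then ‖ u ↦ u^{−α/2} ∫₀^u |f(t)| dt/t ‖_{L^q((0,1], du/u)} ≤ (2/α) · ‖ u ↦ u^{−α/2} f(u) ‖_{L^q((0,1], du/u)}. -/

import Mathlib

/-!
With `b = α / 2` and `g t = t ^ (-b) * |f t|`, the left-hand function is the integral operator
`u ↦ ∫ K(u, t) g(t) dt/t` with kernel `K(u, t) = u ^ (-b) * t ^ b` for `0 < t ≤ u`
(`hardyOp_eq_kernel`). Its row integrals `∫ K(u, t) dt/t` equal `1 / b`, and its column integrals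
`∫ K(u, t) du/u` are at most `1 / b`, so Schur's test bounds the operator norm on every `L^q` by
`1 / b = 2 / α`. For `q = ∞` only the row bound matters (`schur_essSup`); for `q < ∞`, Jensen's
inequality for the measure `K(u, t) dt/t` reduces the claim to Tonelli and the column bound
(`schur_rpow`).
-/

open MeasureTheory
open scoped ENNReal NNReal

/-- The measure `dt/t` on the interval `(0,1] ⊆ ℝ`. -/
noncomputable def haarIoc : Measure ℝ :=
  (volume.restrict (Set.Ioc (0 : ℝ) 1)).withDensity fun t => ENNReal.ofReal t⁻¹

/-- The `L^q` norm on `(0,1]` with respect to the measure `dt/t`, for `q ∈ [1,∞]`: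
the essential supremum if `q = ∞`, and `(∫₀¹ g(t)^q dt/t)^{1/q}` otherwise. -/
noncomputable def lqNorm (q : ℝ≥0∞) (g : ℝ → ℝ≥0∞) : ℝ≥0∞ :=
  if q = ⊤ then essSup g haarIoc
  else (∫⁻ t, g t ^ q.toReal ∂haarIoc) ^ (1 / q.toReal)

/-- Jensen's inequality for the power `p ≥ 1` and a measure of arbitrary total mass. -/
lemma lintegral_rpow_le_measure_univ_mul {X : Type*} [MeasurableSpace X] (ν : Measure X)
    {g : X → ℝ≥0∞} (hg : Measurable g) {p : ℝ} (hp : 1 ≤ p) :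
    (∫⁻ x, g x ∂ν) ^ p ≤ ν Set.univ ^ (p - 1) * ∫⁻ x, g x ^ p ∂ν := by
  have hp0 : 0 < p := by linarith
  have h := eLpNorm'_le_eLpNorm'_mul_rpow_measure_univ (μ := ν) (f := g) one_pos hp
    hg.aestronglyMeasurable
  simp only [eLpNorm', enorm_eq_self, ENNReal.rpow_one, div_one] at h
  calc (∫⁻ x, g x ∂ν) ^ p
      ≤ ((∫⁻ x, g x ^ p ∂ν) ^ (1 / p) * ν Set.univ ^ (1 - 1 / p)) ^ p :=
        ENNReal.rpow_le_rpow h hp0.le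
    _ = _ := by
        rw [ENNReal.mul_rpow_of_nonneg _ _ hp0.le, ← ENNReal.rpow_mul, ← ENNReal.rpow_mul,
          one_div_mul_cancel hp0.ne', ENNReal.rpow_one, mul_comm]
        congr 2
        field_simp

/-- Schur's test in `L^p`, `1 ≤ p < ∞`, when rows and columns of the kernel have the same bound. -/
lemma schur_rpow {X : Type*} [MeasurableSpace X] {μ : Measure X} [SFinite μ] {K : X → X → ℝ≥0∞}
    (hK : Measurable (Function.uncurry K)) {A : ℝ≥0∞} (hA0 : A ≠ 0) (hA : A ≠ ∞)
    (hrow : ∀ᵐ u ∂μ, ∫⁻ t, K u t ∂μ ≤ A) (hcol : ∀ᵐ t ∂μ, ∫⁻ u, K u t ∂μ ≤ A)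
    {g : X → ℝ≥0∞} (hg : Measurable g) {p : ℝ} (hp : 1 ≤ p) :
    ∫⁻ u, (∫⁻ t, K u t * g t ∂μ) ^ p ∂μ ≤ A ^ p * ∫⁻ t, g t ^ p ∂μ := by
  have hgp : Measurable fun t => g t ^ p := hg.pow_const p
  have hKu : ∀ u, Measurable (K u) := fun u => hK.comp measurable_prodMk_left
  have hKt : ∀ t, Measurable fun u => K u t := fun t => hK.comp measurable_prodMk_right
  calc ∫⁻ u, (∫⁻ t, K u t * g t ∂μ) ^ p ∂μ
      ≤ ∫⁻ u, A ^ (p - 1) * ∫⁻ t, K u t * g t ^ p ∂μ ∂μ := by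
        refine lintegral_mono_ae ?_
        filter_upwards [hrow] with u hu
        have h := lintegral_rpow_le_measure_univ_mul (μ.withDensity (K u)) hg hp
        rw [lintegral_withDensity_eq_lintegral_mul _ (hKu u) hg,
          lintegral_withDensity_eq_lintegral_mul _ (hKu u) hgp,
          withDensity_apply _ MeasurableSet.univ, Measure.restrict_univ] at h
        refine h.trans ?_
        exact mul_le_mul' (ENNReal.rpow_le_rpow hu (by linarith)) le_rfl
    _ = A ^ (p - 1) * ∫⁻ u, ∫⁻ t, K u t * g t ^ p ∂μ ∂μ :=
        lintegral_const_mul' _ _ (ENNReal.rpow_ne_top_of_nonneg (by linarith) hA)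
    _ = A ^ (p - 1) * ∫⁻ t, ∫⁻ u, K u t * g t ^ p ∂μ ∂μ := by
        rw [lintegral_lintegral_swap]
        exact (hK.mul (hgp.comp measurable_snd)).aemeasurable
    _ ≤ A ^ (p - 1) * ∫⁻ t, A * g t ^ p ∂μ := by
        refine mul_le_mul' le_rfl (lintegral_mono_ae ?_)
        filter_upwards [hcol] with t ht
        rw [lintegral_mul_const _ (hKt t)]
        gcongr
    _ = A ^ p * ∫⁻ t, g t ^ p ∂μ := by
        rw [lintegral_const_mul _ hgp, ← mul_assoc]
        congr 1
        nth_rewrite 2 [← ENNReal.rpow_one A]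
        rw [← ENNReal.rpow_add _ _ hA0 hA, sub_add_cancel]

lemma schur_essSup {X : Type*} [MeasurableSpace X] {μ : Measure X} {K : X → X → ℝ≥0∞}
    (hK : Measurable (Function.uncurry K)) {A : ℝ≥0∞}
    (hrow : ∀ᵐ u ∂μ, ∫⁻ t, K u t ∂μ ≤ A) (g : X → ℝ≥0∞) :
    essSup (fun u => ∫⁻ t, K u t * g t ∂μ) μ ≤ A * essSup g μ := by
  refine essSup_le_of_ae_le _ ?_
  filter_upwards [hrow] with u hu
  calc ∫⁻ t, K u t * g t ∂μ ≤ ∫⁻ t, K u t * essSup g μ ∂μ := by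
        refine lintegral_mono_ae ?_
        filter_upwards [ENNReal.ae_le_essSup g] with t ht
        gcongr
    _ = (∫⁻ t, K u t ∂μ) * essSup g μ :=
        lintegral_mul_const _ (hK.comp measurable_prodMk_left)
    _ ≤ A * essSup g μ := by gcongr

instance : SFinite haarIoc := by
  unfold haarIoc
  infer_instance

lemma lintegral_haarIoc {h : ℝ → ℝ≥0∞} (hh : Measurable h) :
    ∫⁻ t, h t ∂haarIoc = ∫⁻ t in Set.Ioc (0 : ℝ) 1, ENNReal.ofReal t⁻¹ * h t := by
  unfold haarIoc
  rw [lintegral_withDensity_eq_lintegral_mul _ (by fun_prop) hh]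
  rfl

lemma ae_mem_haarIoc : ∀ᵐ u ∂haarIoc, u ∈ Set.Ioc (0 : ℝ) 1 :=
  (withDensity_absolutelyContinuous _ _).ae_le (ae_restrict_mem measurableSet_Ioc)

/-- The kernel `u ^ (-b) * t ^ b` on `0 < t ≤ u`, zero elsewhere. -/
noncomputable def hardyKernel (b u t : ℝ) : ℝ≥0∞ :=
  if 0 < t ∧ t ≤ u then ENNReal.ofReal (u ^ (-b) * t ^ b) else 0

lemma measurable_hardyKernel (b : ℝ) : Measurable (Function.uncurry (hardyKernel b)) := by
  unfold hardyKernel Function.uncurry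
  refine Measurable.ite ?_ (by fun_prop) measurable_const
  exact (measurableSet_lt measurable_const measurable_snd).inter
    (measurableSet_le measurable_snd measurable_fst)

lemma lintegral_hardyKernel_mul (b : ℝ) {u : ℝ} (hu : u ∈ Set.Ioc (0 : ℝ) 1)
    {h : ℝ → ℝ≥0∞} (hh : Measurable h) :
    ∫⁻ t, hardyKernel b u t * h t ∂haarIoc =
      ∫⁻ t in Set.Ioc (0 : ℝ) u,
        ENNReal.ofReal t⁻¹ * (ENNReal.ofReal (u ^ (-b) * t ^ b) * h t) := by
  have hKu : Measurable (hardyKernel b u) := (measurable_hardyKernel b).comp measurable_prodMk_left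
  rw [lintegral_haarIoc (h := fun t => hardyKernel b u t * h t) (hKu.mul hh),
    ← lintegral_indicator measurableSet_Ioc, ← lintegral_indicator measurableSet_Ioc]
  congr 1
  ext t
  by_cases ht : 0 < t ∧ t ≤ u
  · have h1 : t ∈ Set.Ioc (0 : ℝ) 1 := ⟨ht.1, ht.2.trans hu.2⟩
    simp [Set.indicator_of_mem h1, hardyKernel, ht]
  · simp [hardyKernel, ht]

lemma hardyOp_eq_kernel (b : ℝ) {f : ℝ → ℝ} (hf : Measurable f) {u : ℝ}
    (hu : u ∈ Set.Ioc (0 : ℝ) 1) :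
    ENNReal.ofReal (u ^ (-b)) *
        ∫⁻ t in Set.Ioc (0 : ℝ) u, ENNReal.ofReal |f t| * ENNReal.ofReal t⁻¹ =
      ∫⁻ t, hardyKernel b u t * ENNReal.ofReal (t ^ (-b) * |f t|) ∂haarIoc := by
  rw [lintegral_hardyKernel_mul b hu (by fun_prop), ← lintegral_const_mul _ (by fun_prop)]
  refine setLIntegral_congr_fun measurableSet_Ioc fun t ht => ?_
  have ht0 : 0 < t := ht.1
  have hu0 : 0 < u := hu.1
  have hcancel : t ^ b * t ^ (-b) = 1 := by
    rw [← Real.rpow_add ht0, add_neg_cancel, Real.rpow_zero]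
  rw [← ENNReal.ofReal_mul (by positivity), ← ENNReal.ofReal_mul (by positivity),
    ← ENNReal.ofReal_mul (by positivity), ← ENNReal.ofReal_mul (by positivity)]
  congr 1
  linear_combination (-(u ^ (-b) * |f t| * t⁻¹)) * hcancel

lemma lintegral_hardyKernel_left {b : ℝ} (hb : 0 < b) {u : ℝ} (hu : u ∈ Set.Ioc (0 : ℝ) 1) :
    ∫⁻ t, hardyKernel b u t ∂haarIoc = ENNReal.ofReal (1 / b) := by
  have hu0 : 0 < u := hu.1
  have h := lintegral_hardyKernel_mul b hu (h := fun _ => 1) measurable_const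
  simp only [mul_one] at h
  rw [h]
  have hint : IntegrableOn (fun t : ℝ => t ^ (b - 1)) (Set.Ioc 0 u) := by
    rw [← intervalIntegrable_iff_integrableOn_Ioc_of_le hu0.le]
    exact intervalIntegral.intervalIntegrable_rpow' (by linarith)
  have hval : ∫ t in Set.Ioc 0 u, t ^ (b - 1) = u ^ b / b := by
    rw [← intervalIntegral.integral_of_le hu0.le, integral_rpow (Or.inl (by linarith)),
      sub_add_cancel, Real.zero_rpow hb.ne', sub_zero]
  have hnn : 0 ≤ᵐ[volume.restrict (Set.Ioc 0 u)] fun t : ℝ => t ^ (b - 1) := by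
    filter_upwards [ae_restrict_mem measurableSet_Ioc] with t ht
    exact Real.rpow_nonneg ht.1.le _
  have hcancel : u ^ (-b) * u ^ b = 1 := by
    rw [← Real.rpow_add hu0, neg_add_cancel, Real.rpow_zero]
  calc ∫⁻ t in Set.Ioc 0 u, ENNReal.ofReal t⁻¹ * ENNReal.ofReal (u ^ (-b) * t ^ b)
      = ∫⁻ t in Set.Ioc 0 u, ENNReal.ofReal (u ^ (-b)) * ENNReal.ofReal (t ^ (b - 1)) := by
        refine setLIntegral_congr_fun measurableSet_Ioc fun t ht => ?_
        have ht0 : 0 < t := ht.1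
        rw [← ENNReal.ofReal_mul (by positivity), ← ENNReal.ofReal_mul (by positivity),
          Real.rpow_sub_one ht0.ne']
        congr 1
        ring
    _ = ENNReal.ofReal (u ^ (-b)) * ENNReal.ofReal (u ^ b / b) := by
        rw [lintegral_const_mul _ (by fun_prop), ← ofReal_integral_eq_lintegral_ofReal hint hnn,
          hval]
    _ = ENNReal.ofReal (1 / b) := by
        rw [← ENNReal.ofReal_mul (by positivity), ← mul_div_assoc, hcancel]

lemma lintegral_hardyKernel_right_le {b : ℝ} (hb : 0 < b) {t : ℝ} (ht : t ∈ Set.Ioc (0 : ℝ) 1) :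
    ∫⁻ u, hardyKernel b u t ∂haarIoc ≤ ENNReal.ofReal (1 / b) := by
  have ht0 : 0 < t := ht.1
  have hint : IntegrableOn (fun u : ℝ => u ^ (-b - 1)) (Set.Ioi t) :=
    integrableOn_Ioi_rpow_of_lt (by linarith) ht0
  have hval : ∫ u in Set.Ioi t, u ^ (-b - 1) = t ^ (-b) / b := by
    rw [integral_Ioi_rpow_of_lt (by linarith) ht0, sub_add_cancel, neg_div_neg_eq]
  have hnn : 0 ≤ᵐ[volume.restrict (Set.Ioi t)] fun u : ℝ => u ^ (-b - 1) := by
    filter_upwards [ae_restrict_mem measurableSet_Ioi] with u hu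
    exact Real.rpow_nonneg (ht0.trans hu).le _
  have hcancel : t ^ b * t ^ (-b) = 1 := by
    rw [← Real.rpow_add ht0, add_neg_cancel, Real.rpow_zero]
  have hKt : Measurable fun u => hardyKernel b u t :=
    (measurable_hardyKernel b).comp measurable_prodMk_right
  rw [lintegral_haarIoc hKt]
  calc ∫⁻ u in Set.Ioc 0 1, ENNReal.ofReal u⁻¹ * hardyKernel b u t
      ≤ ∫⁻ u in Set.Ici t, ENNReal.ofReal (t ^ b) * ENNReal.ofReal (u ^ (-b - 1)) := by
        -- the domain of integration is enlarged from `[t, 1]` to `[t, ∞)`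
        rw [← lintegral_indicator measurableSet_Ioc, ← lintegral_indicator measurableSet_Ici]
        refine lintegral_mono fun u => ?_
        refine Set.indicator_apply_le fun hu => ?_
        have hu0 : 0 < u := hu.1
        by_cases htu : t ≤ u
        · rw [Set.indicator_of_mem (show u ∈ Set.Ici t from htu), hardyKernel, if_pos ⟨ht0, htu⟩,
            ← ENNReal.ofReal_mul (by positivity), ← ENNReal.ofReal_mul (by positivity),
            Real.rpow_sub_one hu0.ne']
          apply le_of_eq
          congr 1
          ring
        · simp [hardyKernel, htu]
    _ = ENNReal.ofReal (t ^ b) * ENNReal.ofReal (t ^ (-b) / b) := by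
        rw [← setLIntegral_congr Ioi_ae_eq_Ici, lintegral_const_mul _ (by fun_prop),
          ← ofReal_integral_eq_lintegral_ofReal hint hnn, hval]
    _ = ENNReal.ofReal (1 / b) := by
        rw [← ENNReal.ofReal_mul (by positivity), ← mul_div_assoc, hcancel]

/-- Hardy-type inequality: for `α > 0`, `q ∈ [1,∞]` and measurable `f : (0,1] → ℝ`,
`‖ u ↦ u^{−α/2} ∫₀^u |f(t)| dt/t ‖_{L^q((0,1], du/u)}
  ≤ (2/α) · ‖ u ↦ u^{−α/2} f(u) ‖_{L^q((0,1], du/u)}`. -/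
theorem stmt3 (α : ℝ) (hα : 0 < α) (q : ℝ≥0∞) (hq : 1 ≤ q)
    (f : ℝ → ℝ) (hf : Measurable f) :
    lqNorm q (fun u => ENNReal.ofReal (u ^ (-α / 2)) *
        ∫⁻ t in Set.Ioc (0 : ℝ) u, ENNReal.ofReal |f t| * ENNReal.ofReal t⁻¹) ≤
      ENNReal.ofReal (2 / α) *
        lqNorm q (fun u => ENNReal.ofReal (u ^ (-α / 2) * |f u|)) := by
  set b : ℝ := α / 2 with hb
  have hbpos : 0 < b := by positivity
  have hneg : -α / 2 = -b := by rw [hb]; ring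
  have hA : (2 / α : ℝ) = 1 / b := by rw [hb]; field_simp
  rw [hneg, hA]
  have hg : Measurable fun t : ℝ => ENNReal.ofReal (t ^ (-b) * |f t|) := by fun_prop
  have hcongr : (fun u : ℝ => ENNReal.ofReal (u ^ (-b)) *
        ∫⁻ t in Set.Ioc (0 : ℝ) u, ENNReal.ofReal |f t| * ENNReal.ofReal t⁻¹) =ᵐ[haarIoc]
      fun u => ∫⁻ t, hardyKernel b u t * ENNReal.ofReal (t ^ (-b) * |f t|) ∂haarIoc := by
    filter_upwards [ae_mem_haarIoc] with u hu
    exact hardyOp_eq_kernel b hf hu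
  have hrow : ∀ᵐ u ∂haarIoc, ∫⁻ t, hardyKernel b u t ∂haarIoc ≤ ENNReal.ofReal (1 / b) := by
    filter_upwards [ae_mem_haarIoc] with u hu using (lintegral_hardyKernel_left hbpos hu).le
  have hcol : ∀ᵐ t ∂haarIoc, ∫⁻ u, hardyKernel b u t ∂haarIoc ≤ ENNReal.ofReal (1 / b) := by
    filter_upwards [ae_mem_haarIoc] with t ht using lintegral_hardyKernel_right_le hbpos ht
  unfold lqNorm
  split_ifs with h
  · rw [essSup_congr_ae hcongr]
    exact schur_essSup (measurable_hardyKernel b) hrow _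
  · have hq1 : 1 ≤ q.toReal := by
      rw [← ENNReal.toReal_one]
      exact (ENNReal.toReal_le_toReal ENNReal.one_ne_top h).2 hq
    have hq0 : 0 < q.toReal := by linarith
    have hL : ∫⁻ u, (ENNReal.ofReal (u ^ (-b)) *
          ∫⁻ t in Set.Ioc (0 : ℝ) u, ENNReal.ofReal |f t| * ENNReal.ofReal t⁻¹) ^ q.toReal ∂haarIoc =
        ∫⁻ u, (∫⁻ t, hardyKernel b u t * ENNReal.ofReal (t ^ (-b) * |f t|) ∂haarIoc) ^ q.toReal
          ∂haarIoc := by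
      refine lintegral_congr_ae ?_
      filter_upwards [hcongr] with u hu
      rw [hu]
    rw [hL]
    calc _ ≤ (ENNReal.ofReal (1 / b) ^ q.toReal *
            ∫⁻ t, ENNReal.ofReal (t ^ (-b) * |f t|) ^ q.toReal ∂haarIoc) ^ (1 / q.toReal) :=
          ENNReal.rpow_le_rpow
            (schur_rpow (measurable_hardyKernel b) (by simpa using hbpos) (by simp) hrow hcol hg hq1)
            (by positivity)
      _ = _ := by
          rw [ENNReal.mul_rpow_of_nonneg _ _ (by positivity), ← ENNReal.rpow_mul,
            mul_one_div_cancel hq0.ne', ENNReal.rpow_one]
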